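/- $b$-testing for the Cauchy integral along a Lipschitz graph: Let $A : \mathbb{R} \to \mathbb{R}$ be Lipschitz and differentiable, let $b(x) = 1 + iA'(x)$, and let $I = [\alpha,\beta]$ be a compact interval. Then for every $x$ in the open interval $(\alpha,\beta)$, the principal value $$C_A(\mathbf{1}_I b)(x) = \lim_{\varepsilon\to 0^+} \int_{I\setminus(x-\varepsilon,x+\varepsilon)} \frac{1 + iA'(y)}{x - y + i(A(x) - A(y))}\,dy$$ exists and equals $$\operatorname{Log}\left(\frac{x - \alpha + i(A(x) - A(\alpha))}{\beta - x + i(A(\beta) - A(x))}\right),$$ where $\operatorname{Log}$ is the principal branch of the complex logarithm, and moreover $\int_\alpha^\beta |C_A(\mathbf{1}_I b)(x)|^2\,dx \le C(\beta - \alpha)$, where $C$ depends only on the Lipschitz constant of $A$. -/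

import Mathlib

open MeasureTheory Set Filter Topology
open scoped NNReal

noncomputable section

/-- The kernel `K_A(x,y) = 1 / (x - y + i (A x - A y))` of the Cauchy integral along the graph
`{x + i A x : x ∈ ℝ}`. -/
def cauchyKernel (A : ℝ → ℝ) (x y : ℝ) : ℂ :=
  1 / (((x - y : ℝ) : ℂ) + Complex.I * ((A x - A y : ℝ) : ℂ))

/-- The function `b(y) = 1 + i A'(y)`. -/
def graphDensity (A : ℝ → ℝ) (y : ℝ) : ℂ :=
  1 + Complex.I * ((deriv A y : ℝ) : ℂ)

/-- The truncated Cauchy integral `∫_{ℝ ∖ (x-ε, x+ε)} K_A(x,y) f(y) dy`. -/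
def truncatedCauchy (A : ℝ → ℝ) (ε : ℝ) (f : ℝ → ℂ) (x : ℝ) : ℂ :=
  ∫ y in (Ioo (x - ε) (x + ε))ᶜ, cauchyKernel A x y * f y

/-- The Cauchy integral `C_A f (x)`, as the principal value
`lim_{ε → 0⁺} ∫_{ℝ ∖ (x-ε, x+ε)} K_A(x,y) f(y) dy` (an arbitrary value if there is no limit). -/
def cauchyIntegral (A : ℝ → ℝ) (f : ℝ → ℂ) (x : ℝ) : ℂ :=
  limUnder (𝓝[>] (0 : ℝ)) (fun ε => truncatedCauchy A ε f x)

end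

/-!
Put `γ t = t + i A t`. The function `y ↦ K_A(x, y) b(y) = γ'(y) / (γ x - γ y)` is minus the
logarithmic derivative of `y ↦ γ x - γ y`, which stays in an open half-plane on either side of `x`,
so a truncated integral of `1_I b` is a difference of principal logarithms. The terms coming from
the endpoints of `I` give the stated value; those coming from `x ± ε` cancel in the limit because
`γ` is differentiable at `x`.

For the `L²` bound, `|γ x - γ y| / |x - y| ∈ [1, 1 + L]` and the argument of a logarithm is bounded
by `π`, so `|C_A(1_I b)|` differs by a bounded amount from its value for `A = 0`, and
`∫₀¹ log² = 2`. By Rademacher's theorem, differentiability of `A` almost everywhere comes for free.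
-/

/-! ### Integrals of logarithmic derivatives -/

lemma integral_eq_sub_of_lipschitzOnWith_of_ae_hasDerivAt {E : Type*} [NormedAddCommGroup E]
    [NormedSpace ℝ E] [CompleteSpace E] {f f' : ℝ → E} {K : ℝ≥0} {a b : ℝ}
    (hf : LipschitzOnWith K f (uIcc a b)) (hderiv : ∀ᵐ t, t ∈ uIoc a b → HasDerivAt f (f' t) t)
    (hint : IntervalIntegrable f' volume a b) :
    ∫ t in a..b, f' t = f b - f a := by
  refine (SeparatingDual.eq_iff_forall_dual_eq (R := ℝ)).2 fun φ => ?_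
  have hφ : AbsolutelyContinuousOnInterval (φ ∘ f) a b :=
    (φ.lipschitz.comp_lipschitzOnWith hf).absolutelyContinuousOnInterval
  calc φ (∫ t in a..b, f' t) = ∫ t in a..b, φ (f' t) := (φ.intervalIntegral_comp_comm hint).symm
    _ = ∫ t in a..b, deriv (φ ∘ f) t := intervalIntegral.integral_congr_ae <|
        hderiv.mono fun t ht htab => (φ.hasFDerivAt.comp_hasDerivAt t (ht htab)).deriv.symm
    _ = φ (f b - f a) := by rw [hφ.integral_deriv_eq_sub, map_sub, Function.comp, Function.comp]

lemma lipschitzOnWith_log_of_le_re {δ : ℝ} (hδ : 0 < δ) :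
    LipschitzOnWith (Real.toNNReal δ⁻¹) Complex.log {z | δ ≤ z.re} := by
  have hslit : ∀ z ∈ {z : ℂ | δ ≤ z.re}, z ∈ Complex.slitPlane :=
    fun z hz => Or.inl (hδ.trans_le hz)
  refine (convex_halfSpace_re_ge δ).lipschitzOnWith_of_nnnorm_hasDerivWithin_le
    (fun z hz => (Complex.hasDerivAt_log (hslit z hz)).hasDerivWithinAt) fun z hz => ?_
  rw [← NNReal.coe_le_coe, coe_nnnorm, norm_inv, Real.coe_toNNReal _ (inv_nonneg.2 hδ.le)]
  gcongr
  exact (show δ ≤ z.re from hz).trans (Complex.re_le_norm z)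

lemma integral_div_eq_log_sub_log {f f' : ℝ → ℂ} {K : ℝ≥0} {δ a b : ℝ} (hδ : 0 < δ)
    (hf : LipschitzOnWith K f (uIcc a b)) (hre : ∀ t ∈ uIcc a b, δ ≤ (f t).re)
    (hderiv : ∀ᵐ t, t ∈ uIoc a b → HasDerivAt f (f' t) t)
    (hint : IntervalIntegrable (fun t => f' t / f t) volume a b) :
    ∫ t in a..b, f' t / f t = Complex.log (f b) - Complex.log (f a) := by
  refine integral_eq_sub_of_lipschitzOnWith_of_ae_hasDerivAt
    ((lipschitzOnWith_log_of_le_re hδ).comp hf hre) (hderiv.mono fun t ht htab => ?_) hint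
  exact (ht htab).clog_real (Or.inl (hδ.trans_le (hre t (uIoc_subset_uIcc htab))))

lemma log_div_of_re_pos {z w : ℂ} (hz : 0 < z.re) (hw : 0 < w.re) :
    Complex.log (z / w) = Complex.log z - Complex.log w := by
  have hz0 : z ≠ 0 := fun h => by simp [h] at hz
  have hw0 : w ≠ 0 := fun h => by simp [h] at hw
  have hargz := abs_lt.1 (Complex.abs_arg_lt_pi_div_two_iff.2 (Or.inl hz))
  have hargw := abs_lt.1 (Complex.abs_arg_lt_pi_div_two_iff.2 (Or.inl hw))
  have hargw_ne : w.arg ≠ Real.pi := by linarith [Real.pi_pos]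
  rw [div_eq_mul_inv, Complex.log_mul hz0 (inv_ne_zero hw0), Complex.log_inv w hargw_ne,
    sub_eq_add_neg]
  rw [Complex.arg_inv, if_neg hargw_ne]
  constructor <;> linarith

-- Both increments are asymptotic to `ε γ'`, and the two copies of `log ε` cancel.
lemma tendsto_log_sub_log_of_hasDerivAt {γ : ℝ → ℂ} {γ' : ℂ} {x : ℝ} (hγ : HasDerivAt γ γ' x)
    (hγ' : γ' ∈ Complex.slitPlane) :
    Tendsto (fun ε => Complex.log (γ (x + ε) - γ x) - Complex.log (γ x - γ (x - ε)))
      (𝓝[>] 0) (𝓝 0) := by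
  have hright : Tendsto (fun ε => ε⁻¹ • (γ (x + ε) - γ x)) (𝓝[>] 0) (𝓝 γ') :=
    hγ.tendsto_slope_zero_right
  have hleft : Tendsto (fun ε => ε⁻¹ • (γ x - γ (x - ε))) (𝓝[>] 0) (𝓝 γ') := by
    have hneg : Tendsto (fun ε : ℝ => -ε) (𝓝[>] 0) (𝓝[<] 0) := by
      simpa only [neg_zero] using tendsto_neg_nhdsGT (a := (0 : ℝ))
    refine (hγ.tendsto_slope_zero_left.comp hneg).congr fun ε => ?_
    rw [Function.comp_apply, inv_neg, neg_smul, ← smul_neg, neg_sub, ← sub_eq_add_neg]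
  have hlog := (hright.clog hγ').sub (hleft.clog hγ')
  rw [sub_self] at hlog
  have hγ'0 : γ' ≠ 0 := Complex.slitPlane_ne_zero hγ'
  refine hlog.congr' ?_
  filter_upwards [self_mem_nhdsWithin, hright.eventually_ne hγ'0, hleft.eventually_ne hγ'0]
    with ε (hε : 0 < ε) hr hl
  rw [Complex.real_smul, Complex.real_smul,
    Complex.log_ofReal_mul (inv_pos.2 hε) (smul_ne_zero_iff.1 hr).2,
    Complex.log_ofReal_mul (inv_pos.2 hε) (smul_ne_zero_iff.1 hl).2, add_sub_add_left_eq_sub]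

/-! ### Squares of logarithms -/

lemma norm_log_sq_le (z : ℂ) : ‖Complex.log z‖ ^ 2 ≤ Real.log ‖z‖ ^ 2 + Real.pi ^ 2 := by
  rw [Complex.sq_norm, Complex.normSq_apply, Complex.log_re, Complex.log_im, ← sq, ← sq]
  exact add_le_add_right (sq_le_sq' (Complex.neg_pi_lt_arg z).le (Complex.arg_le_pi z)) _

lemma abs_log_div_sub_log_div_le {K u v s t : ℝ} (hu : 0 < u) (hv : 0 < v) (hus : u ≤ s)
    (hsu : s ≤ K * u) (hvt : v ≤ t) (htv : t ≤ K * v) :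
    |Real.log (s / t) - Real.log (u / v)| ≤ Real.log K := by
  have hs : 0 < s := hu.trans_le hus
  have ht : 0 < t := hv.trans_le hvt
  have hK : 0 < K := pos_of_mul_pos_left (hs.trans_le hsu) hu.le
  have hlog_us := Real.log_le_log hu hus
  have hlog_vt := Real.log_le_log hv hvt
  have hlog_su := Real.log_le_log hs hsu
  have hlog_tv := Real.log_le_log ht htv
  rw [Real.log_mul hK.ne' hu.ne'] at hlog_su
  rw [Real.log_mul hK.ne' hv.ne'] at hlog_tv
  rw [Real.log_div hs.ne' ht.ne', Real.log_div hu.ne' hv.ne', abs_le]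
  constructor <;> linarith

lemma sq_log_div_le {u v : ℝ} (hu : 0 < u) (hu1 : u ≤ 1) (hv : 0 < v) (hv1 : v ≤ 1) :
    Real.log (u / v) ^ 2 ≤ Real.log u ^ 2 + Real.log v ^ 2 := by
  rw [Real.log_div hu.ne' hv.ne']
  nlinarith [mul_nonneg_of_nonpos_of_nonpos (Real.log_nonpos hu.le hu1) (Real.log_nonpos hv.le hv1)]

lemma continuousOn_mul_sq_log : ContinuousOn (fun w : ℝ => w * Real.log w ^ 2) (Ici 0) := by
  have hsqrt : ContinuousOn (fun w : ℝ => 4 * (√w * Real.log √w) ^ 2) (Ici 0) :=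
    (((Real.continuous_mul_log.comp Real.continuous_sqrt).pow 2).const_mul 4).continuousOn
  refine hsqrt.congr fun w (hw : 0 ≤ w) => ?_
  simp only [Real.log_sqrt hw, mul_pow, Real.sq_sqrt hw, div_pow]
  ring

/-- The primitive of `log ^ 2` on `(0, ∞)` that vanishes at `0`. -/
noncomputable def sqLogPrimitive (w : ℝ) : ℝ :=
  w * Real.log w ^ 2 - 2 * (w * Real.log w) + 2 * w

lemma continuousOn_sqLogPrimitive : ContinuousOn sqLogPrimitive (Ici 0) :=
  (continuousOn_mul_sq_log.sub (Real.continuous_mul_log.const_mul 2).continuousOn).add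
    (continuous_const_mul 2).continuousOn

lemma hasDerivAt_sqLogPrimitive {w : ℝ} (hw : w ≠ 0) :
    HasDerivAt sqLogPrimitive (Real.log w ^ 2) w := by
  have hlog := Real.hasDerivAt_log hw
  have hsq := (hasDerivAt_id w).mul (hlog.pow 2)
  have hmul := (Real.hasDerivAt_mul_log hw).const_mul 2
  refine ((hsq.sub hmul).add ((hasDerivAt_id w).const_mul 2)).congr_deriv ?_
  simp only [id, Pi.pow_apply]
  field_simp
  ring

lemma intervalIntegrable_sq_log {a : ℝ} (ha : 0 ≤ a) :
    IntervalIntegrable (fun w => Real.log w ^ 2) volume 0 a :=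
  (intervalIntegrable_iff_integrableOn_Ioc_of_le ha).2 <|
    intervalIntegral.integrableOn_deriv_of_nonneg
      (continuousOn_sqLogPrimitive.mono Icc_subset_Ici_self)
      (fun _ hw => hasDerivAt_sqLogPrimitive hw.1.ne') fun _ _ => sq_nonneg _

lemma integral_sq_log {a : ℝ} (ha : 0 ≤ a) :
    ∫ w in (0 : ℝ)..a, Real.log w ^ 2 = sqLogPrimitive a := by
  rw [intervalIntegral.integral_eq_sub_of_hasDerivAt_of_le ha
    (continuousOn_sqLogPrimitive.mono Icc_subset_Ici_self)
    (fun _ hw => hasDerivAt_sqLogPrimitive hw.1.ne') (intervalIntegrable_sq_log ha)]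
  simp [sqLogPrimitive]

lemma intervalIntegrable_sq_log_one_sub :
    IntervalIntegrable (fun w : ℝ => Real.log (1 - w) ^ 2) volume 0 1 := by
  simpa only [sub_zero, sub_self] using
    ((intervalIntegrable_sq_log zero_le_one).comp_sub_left 1).symm

/-- The singular part of the majorant for `|C_A(1_I b)|²`, for `I` rescaled to `[0, 1]`. -/
noncomputable def sqLogEndpoints (w : ℝ) : ℝ :=
  Real.log w ^ 2 + Real.log (1 - w) ^ 2

lemma intervalIntegrable_sqLogEndpoints : IntervalIntegrable sqLogEndpoints volume 0 1 :=
  (intervalIntegrable_sq_log zero_le_one).add intervalIntegrable_sq_log_one_sub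

lemma integral_sqLogEndpoints : ∫ w in (0 : ℝ)..1, sqLogEndpoints w = 4 := by
  simp only [sqLogEndpoints]
  rw [intervalIntegral.integral_add (intervalIntegrable_sq_log zero_le_one)
      intervalIntegrable_sq_log_one_sub,
    intervalIntegral.integral_comp_sub_left (fun w => Real.log w ^ 2), sub_self, sub_zero,
    integral_sq_log zero_le_one]
  norm_num [sqLogPrimitive]

section rescale

variable {E : Type*} [NormedAddCommGroup E] {f : ℝ → E}

lemma intervalIntegrable_comp_rescale (hf : IntervalIntegrable f volume 0 1) (α β : ℝ) :
    IntervalIntegrable (fun x => f ((x - α) / (β - α))) volume α β := by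
  rcases eq_or_ne α β with rfl | hne
  · exact IntervalIntegrable.refl
  · have hscaled := (hf.comp_mul_left (c := (β - α)⁻¹)).comp_sub_right α
    simpa [sub_ne_zero.2 hne.symm, div_eq_inv_mul] using hscaled

lemma integral_comp_rescale [NormedSpace ℝ E] (f : ℝ → E) (α β : ℝ) :
    ∫ x in α..β, f ((x - α) / (β - α)) = (β - α) • ∫ w in (0 : ℝ)..1, f w := by
  rcases eq_or_ne α β with rfl | hne
  · simp
  · have hℓ : β - α ≠ 0 := sub_ne_zero.2 hne.symm
    rw [intervalIntegral.integral_comp_sub_right (fun x => f (x / (β - α))),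
      intervalIntegral.integral_comp_div f hℓ, sub_self, zero_div, div_self hℓ]

end rescale

/-! ### The Cauchy integral along a Lipschitz graph -/

/-- The parametrization `t ↦ t + i A t` of the graph of `A`. Its increments are the denominators
of `cauchyKernel`, and its derivative is `graphDensity`. -/
def graphParam (A : ℝ → ℝ) (t : ℝ) : ℂ :=
  (t : ℂ) + Complex.I * (A t : ℂ)

section graphParam

variable {A : ℝ → ℝ} {L : ℝ≥0} {f : ℝ → ℂ} {s : Set ℝ} {x α β ε : ℝ}

lemma graphParam_sub (A : ℝ → ℝ) (x y : ℝ) :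
    graphParam A x - graphParam A y =
      ((x - y : ℝ) : ℂ) + Complex.I * ((A x - A y : ℝ) : ℂ) := by
  simp only [graphParam, Complex.ofReal_sub]
  ring

lemma graphParam_sub_re (A : ℝ → ℝ) (x y : ℝ) : (graphParam A x - graphParam A y).re = x - y := by
  simp [graphParam]

lemma abs_sub_le_norm_graphParam_sub (A : ℝ → ℝ) (x y : ℝ) :
    |x - y| ≤ ‖graphParam A x - graphParam A y‖ :=
  graphParam_sub_re A x y ▸ Complex.abs_re_le_norm _

lemma cauchyKernel_eq_inv_graphParam_sub (A : ℝ → ℝ) (x y : ℝ) :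
    cauchyKernel A x y = (graphParam A x - graphParam A y)⁻¹ := by
  rw [cauchyKernel, one_div, graphParam_sub]

lemma lipschitzWith_graphParam (hA : LipschitzWith L A) : LipschitzWith (1 + L) (graphParam A) := by
  have hI : LipschitzWith 1 fun t : ℝ => Complex.I * (t : ℂ) :=
    LipschitzWith.of_dist_le_mul fun s t => by simp [dist_eq_norm, ← mul_sub, ← Complex.ofReal_sub]
  exact one_mul L ▸ Complex.isometry_ofReal.lipschitz.add (hI.comp hA)

lemma norm_graphParam_sub_le (hA : LipschitzWith L A) (x y : ℝ) :
    ‖graphParam A x - graphParam A y‖ ≤ (1 + L) * |x - y| := by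
  simpa using (lipschitzWith_graphParam hA).norm_sub_le x y

lemma hasDerivAt_graphParam (hA : DifferentiableAt ℝ A x) :
    HasDerivAt (graphParam A) (graphDensity A x) x :=
  (hasDerivAt_id x).ofReal_comp.add (hA.hasDerivAt.ofReal_comp.const_mul Complex.I)

lemma graphDensity_re (A : ℝ → ℝ) (x : ℝ) : (graphDensity A x).re = 1 := by
  simp [graphDensity]

lemma measurable_graphDensity (A : ℝ → ℝ) : Measurable (graphDensity A) :=
  ((Complex.measurable_ofReal.comp (measurable_deriv A)).const_mul Complex.I).const_add 1

lemma norm_graphDensity_le (hA : LipschitzWith L A) (x : ℝ) : ‖graphDensity A x‖ ≤ 1 + L :=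
  calc ‖graphDensity A x‖ ≤ ‖(1 : ℂ)‖ + ‖Complex.I * ((deriv A x : ℝ) : ℂ)‖ := norm_add_le _ _
    _ = 1 + ‖deriv A x‖ := by
        rw [norm_one, norm_mul, Complex.norm_I, one_mul, Complex.norm_real]
    _ ≤ 1 + L := by gcongr; exact norm_deriv_le_of_lipschitz hA

lemma integrableOn_graphDensity (hA : LipschitzWith L A) (hs : volume s ≠ ⊤) :
    IntegrableOn (graphDensity A) s :=
  Measure.integrableOn_of_bounded hs (measurable_graphDensity A).aestronglyMeasurable
    (Eventually.of_forall (norm_graphDensity_le hA))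

lemma integrableOn_cauchyKernel_mul (hA : Measurable A) (hs : MeasurableSet s)
    (hf : IntegrableOn f s) (hε : 0 < ε) (hsx : ∀ y ∈ s, ε ≤ |x - y|) :
    IntegrableOn (fun y => cauchyKernel A x y * f y) s := by
  have hmeas : Measurable (cauchyKernel A x) := by unfold cauchyKernel; fun_prop
  refine Integrable.bdd_mul (c := ε⁻¹) hf hmeas.aestronglyMeasurable ?_
  filter_upwards [ae_restrict_mem hs] with y hy
  rw [cauchyKernel_eq_inv_graphParam_sub, norm_inv]
  gcongr
  exact (hsx y hy).trans (abs_sub_le_norm_graphParam_sub A x y)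

lemma le_abs_sub_of_notMem_Ioo {y : ℝ} (hy : y ∉ Ioo (x - ε) (x + ε)) : ε ≤ |x - y| := by
  by_contra! h
  rw [abs_sub_lt_iff] at h
  exact hy ⟨by linarith, by linarith⟩

lemma integrableOn_cauchyKernel_mul_compl_Ioo (hA : Measurable A) (hf : Integrable f) (x : ℝ)
    (hε : 0 < ε) :
    IntegrableOn (fun y => cauchyKernel A x y * f y) (Ioo (x - ε) (x + ε))ᶜ :=
  integrableOn_cauchyKernel_mul hA measurableSet_Ioo.compl hf.integrableOn hε
    fun _ => le_abs_sub_of_notMem_Ioo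

lemma truncatedCauchy_indicator_Icc (hα : α ≤ x - ε) (hε : 0 < ε) (hβ : x + ε ≤ β)
    (hl : IntegrableOn (fun y => cauchyKernel A x y * f y) (Icc α (x - ε)))
    (hr : IntegrableOn (fun y => cauchyKernel A x y * f y) (Icc (x + ε) β)) :
    truncatedCauchy A ε ((Icc α β).indicator f) x =
      (∫ y in α..x - ε, cauchyKernel A x y * f y) + ∫ y in x + ε..β, cauchyKernel A x y * f y := by
  have hset : (Ioo (x - ε) (x + ε))ᶜ ∩ Icc α β = Icc α (x - ε) ∪ Icc (x + ε) β := by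
    grind
  have hdisj : Disjoint (Icc α (x - ε)) (Icc (x + ε) β) := by
    grind
  simp only [truncatedCauchy, ← indicator_mul_right]
  rw [setIntegral_indicator measurableSet_Icc, hset,
    setIntegral_union hdisj measurableSet_Icc hl hr, integral_Icc_eq_integral_Ioc,
    integral_Icc_eq_integral_Ioc, intervalIntegral.integral_of_le hα,
    intervalIntegral.integral_of_le hβ]

-- `c = 1` is used to the left of `x` and `c = -1` to the right, so that the argument of the
-- logarithm stays in the right half-plane.
lemma integral_cauchyKernel_mul_graphDensity (hA : LipschitzWith L A) {a b : ℝ} {c : ℂ}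
    (hε : 0 < ε) (hre : ∀ y ∈ uIcc a b, ε ≤ (c * (graphParam A x - graphParam A y)).re)
    (hint : IntervalIntegrable (fun y => cauchyKernel A x y * graphDensity A y) volume a b) :
    ∫ y in a..b, cauchyKernel A x y * graphDensity A y =
      Complex.log (c * (graphParam A x - graphParam A a)) -
        Complex.log (c * (graphParam A x - graphParam A b)) := by
  have hc : c ≠ 0 := by
    rintro rfl
    have := hre a left_mem_uIcc
    rw [zero_mul, Complex.zero_re] at this
    exact this.not_gt hε
  have hlogDeriv : ∀ y, -(cauchyKernel A x y * graphDensity A y) =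
      c * -graphDensity A y / (c * (graphParam A x - graphParam A y)) := fun y => by
    rw [mul_div_mul_left _ _ hc, cauchyKernel_eq_inv_graphParam_sub]
    ring
  have hlip : LipschitzWith (‖c‖₊ * (1 + L)) fun y => c * (graphParam A x - graphParam A y) := by
    simpa only [zero_add] using!
      (lipschitzWith_smul c).comp
        ((LipschitzWith.const (graphParam A x)).sub (lipschitzWith_graphParam hA))
  have hderiv : ∀ᵐ y, y ∈ uIoc a b → HasDerivAt
      (fun y => c * (graphParam A x - graphParam A y)) (c * -graphDensity A y) y :=
    hA.ae_differentiableAt_real.mono fun y hy _ =>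
      ((hasDerivAt_graphParam hy).const_sub _).const_mul c
  have hint' := hint.neg
  simp only [Pi.neg_def, hlogDeriv] at hint'
  have hFTC := integral_div_eq_log_sub_log hε (hlip.lipschitzOnWith) hre hderiv hint'
  simp only [← hlogDeriv, intervalIntegral.integral_neg] at hFTC
  rw [← neg_sub, ← hFTC, neg_neg]

lemma truncatedCauchy_indicator_graphDensity (hA : LipschitzWith L A) (hα : α ≤ x - ε)
    (hε : 0 < ε) (hβ : x + ε ≤ β) :
    truncatedCauchy A ε ((Icc α β).indicator (graphDensity A)) x =
      Complex.log (graphParam A x - graphParam A α) -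
          Complex.log (graphParam A β - graphParam A x) +
        (Complex.log (graphParam A (x + ε) - graphParam A x) -
          Complex.log (graphParam A x - graphParam A (x - ε))) := by
  have hint : ∀ a b : ℝ, (∀ y ∈ Icc a b, ε ≤ |x - y|) →
      IntegrableOn (fun y => cauchyKernel A x y * graphDensity A y) (Icc a b) := fun a b =>
    integrableOn_cauchyKernel_mul hA.continuous.measurable measurableSet_Icc
      (integrableOn_graphDensity hA measure_Icc_lt_top.ne) hε
  have hl := hint α (x - ε) fun y hy => (le_abs_self _).trans' (by linarith [hy.2])
  have hr := hint (x + ε) β fun y hy => (neg_le_abs _).trans' (by linarith [hy.1])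
  rw [truncatedCauchy_indicator_Icc hα hε hβ hl hr,
    integral_cauchyKernel_mul_graphDensity (c := 1) hA hε ?_
      ((intervalIntegrable_iff_integrableOn_Icc_of_le hα).2 hl),
    integral_cauchyKernel_mul_graphDensity (c := -1) hA hε ?_
      ((intervalIntegrable_iff_integrableOn_Icc_of_le hβ).2 hr)]
  · simp only [one_mul, neg_one_mul, neg_sub]
    ring
  · intro y hy
    rw [uIcc_of_le hβ] at hy
    rw [neg_one_mul, neg_sub, graphParam_sub_re]
    linarith [hy.1]
  · intro y hy
    rw [uIcc_of_le hα] at hy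
    rw [one_mul, graphParam_sub_re]
    linarith [hy.2]

lemma tendsto_truncatedCauchy_indicator_graphDensity (hA : LipschitzWith L A)
    (hx : x ∈ Ioo α β) (hd : DifferentiableAt ℝ A x) :
    Tendsto (fun ε => truncatedCauchy A ε ((Icc α β).indicator (graphDensity A)) x) (𝓝[>] 0)
      (𝓝 (Complex.log
        ((graphParam A x - graphParam A α) / (graphParam A β - graphParam A x)))) := by
  have hαx : 0 < x - α := sub_pos.2 hx.1
  have hxβ : 0 < β - x := sub_pos.2 hx.2
  have hslit : graphDensity A x ∈ Complex.slitPlane :=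
    Or.inl ((graphDensity_re A x).symm ▸ one_pos)
  have hlim := (tendsto_log_sub_log_of_hasDerivAt (hasDerivAt_graphParam hd) hslit).const_add
    (Complex.log (graphParam A x - graphParam A α) - Complex.log (graphParam A β - graphParam A x))
  rw [add_zero] at hlim
  rw [log_div_of_re_pos (by rwa [graphParam_sub_re]) (by rwa [graphParam_sub_re])]
  refine hlim.congr' ?_
  filter_upwards [Ioc_mem_nhdsGT (lt_min hαx hxβ)] with ε ⟨hε, hεle⟩
  have hα : α ≤ x - ε := by linarith [min_le_left (x - α) (β - x)]
  have hβ : x + ε ≤ β := by linarith [min_le_right (x - α) (β - x)]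
  exact (truncatedCauchy_indicator_graphDensity hA hα hε hβ).symm

lemma ae_cauchyIntegral_indicator_graphDensity (hA : LipschitzWith L A) (α β : ℝ) :
    ∀ᵐ x, x ∈ Ioo α β → cauchyIntegral A ((Icc α β).indicator (graphDensity A)) x =
      Complex.log ((graphParam A x - graphParam A α) / (graphParam A β - graphParam A x)) :=
  hA.ae_differentiableAt_real.mono fun _ hd hx =>
    (tendsto_truncatedCauchy_indicator_graphDensity hA hx hd).limUnder_eq

lemma abs_log_norm_graphParam_sub_div_sub_le (hA : LipschitzWith L A) (hx : x ∈ Ioo α β) :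
    |Real.log ‖(graphParam A x - graphParam A α) / (graphParam A β - graphParam A x)‖ -
      Real.log ((x - α) / (β - x))| ≤ Real.log (1 + L) := by
  have hαx : 0 < x - α := sub_pos.2 hx.1
  have hxβ : 0 < β - x := sub_pos.2 hx.2
  rw [norm_div, ← abs_of_pos hαx, ← abs_of_pos hxβ]
  exact abs_log_div_sub_log_div_le (abs_pos.2 hαx.ne') (abs_pos.2 hxβ.ne')
    (abs_sub_le_norm_graphParam_sub A x α) (norm_graphParam_sub_le hA x α)
    (abs_sub_le_norm_graphParam_sub A β x) (norm_graphParam_sub_le hA β x)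

lemma sq_log_div_le_sqLogEndpoints (hx : x ∈ Ioo α β) :
    Real.log ((x - α) / (β - x)) ^ 2 ≤ sqLogEndpoints ((x - α) / (β - α)) := by
  have hαx : 0 < x - α := sub_pos.2 hx.1
  have hxβ : 0 < β - x := sub_pos.2 hx.2
  have hαβ : 0 < β - α := by linarith
  have hcompl : 1 - (x - α) / (β - α) = (β - x) / (β - α) := by field_simp; ring
  rw [sqLogEndpoints, hcompl, ← div_div_div_cancel_right₀ hαβ.ne' (x - α)]
  exact sq_log_div_le (div_pos hαx hαβ) ((div_le_one hαβ).2 (by linarith)) (div_pos hxβ hαβ)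
    ((div_le_one hαβ).2 (by linarith))

lemma sq_norm_log_graphParam_sub_div_sub_le (hA : LipschitzWith L A) (hx : x ∈ Ioo α β) :
    ‖Complex.log ((graphParam A x - graphParam A α) / (graphParam A β - graphParam A x))‖ ^ 2 ≤
      2 * sqLogEndpoints ((x - α) / (β - α)) + (2 * Real.log (1 + L) ^ 2 + Real.pi ^ 2) := by
  set z := (graphParam A x - graphParam A α) / (graphParam A β - graphParam A x)
  set r := Real.log ((x - α) / (β - x))
  have hdiff : (Real.log ‖z‖ - r) ^ 2 ≤ Real.log (1 + L) ^ 2 :=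
    sq_le_sq.2 ((abs_log_norm_graphParam_sub_div_sub_le hA hx).trans (le_abs_self _))
  have hr : r ^ 2 ≤ sqLogEndpoints ((x - α) / (β - α)) := sq_log_div_le_sqLogEndpoints hx
  calc ‖Complex.log z‖ ^ 2 ≤ (r + (Real.log ‖z‖ - r)) ^ 2 + Real.pi ^ 2 := by
        rw [add_sub_cancel]; exact norm_log_sq_le z
    _ ≤ 2 * (r ^ 2 + (Real.log ‖z‖ - r) ^ 2) + Real.pi ^ 2 := by gcongr; exact add_sq_le
    _ ≤ _ := by linarith

lemma ae_sq_norm_cauchyIntegral_le (hA : LipschitzWith L A) (α β : ℝ) :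
    ∀ᵐ x, x ∈ Ioo α β → ‖cauchyIntegral A ((Icc α β).indicator (graphDensity A)) x‖ ^ 2 ≤
      2 * sqLogEndpoints ((x - α) / (β - α)) + (2 * Real.log (1 + L) ^ 2 + Real.pi ^ 2) := by
  filter_upwards [ae_cauchyIntegral_indicator_graphDensity hA α β] with x heq hx
  exact heq hx ▸ sq_norm_log_graphParam_sub_div_sub_le hA hx

lemma aestronglyMeasurable_cauchyIntegral_indicator_graphDensity (hA : LipschitzWith L A)
    (α β : ℝ) :
    AEStronglyMeasurable (cauchyIntegral A ((Icc α β).indicator (graphDensity A)))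
      (volume.restrict (Ioo α β)) := by
  have hγ : Measurable (graphParam A) := (lipschitzWith_graphParam hA).continuous.measurable
  have hlog : Measurable fun x =>
      Complex.log ((graphParam A x - graphParam A α) / (graphParam A β - graphParam A x)) :=
    Complex.measurable_log.comp ((hγ.sub_const _).div (hγ.const_sub _))
  refine hlog.aestronglyMeasurable.congr ?_
  filter_upwards [(ae_restrict_iff' measurableSet_Ioo).2
    (ae_cauchyIntegral_indicator_graphDensity hA α β)] with x hx using hx.symm

lemma intervalIntegrable_two_mul_sqLogEndpoints_rescale_add (c α β : ℝ) :
    IntervalIntegrable (fun x => 2 * sqLogEndpoints ((x - α) / (β - α)) + c) volume α β :=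
  ((intervalIntegrable_comp_rescale intervalIntegrable_sqLogEndpoints α β).const_mul 2).add
    intervalIntegrable_const

lemma integral_two_mul_sqLogEndpoints_rescale_add (c α β : ℝ) :
    ∫ x in α..β, (2 * sqLogEndpoints ((x - α) / (β - α)) + c) = (8 + c) * (β - α) := by
  rw [intervalIntegral.integral_add
      ((intervalIntegrable_comp_rescale intervalIntegrable_sqLogEndpoints α β).const_mul 2)
      intervalIntegrable_const,
    intervalIntegral.integral_const_mul, integral_comp_rescale, integral_sqLogEndpoints,
    intervalIntegral.integral_const, smul_eq_mul, smul_eq_mul]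
  ring

lemma integrableOn_sq_norm_cauchyIntegral (hA : LipschitzWith L A) (hαβ : α ≤ β) :
    IntegrableOn (fun x => ‖cauchyIntegral A ((Icc α β).indicator (graphDensity A)) x‖ ^ 2)
      (Icc α β) := by
  rw [integrableOn_Icc_iff_integrableOn_Ioo]
  have hmajorant := (intervalIntegrable_iff_integrableOn_Ioo_of_le hαβ).1
    (intervalIntegrable_two_mul_sqLogEndpoints_rescale_add
      (2 * Real.log (1 + L) ^ 2 + Real.pi ^ 2) α β)
  refine hmajorant.mono'
    ((aestronglyMeasurable_cauchyIntegral_indicator_graphDensity hA α β).norm.pow 2) ?_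
  filter_upwards [(ae_restrict_iff' measurableSet_Ioo).2 (ae_sq_norm_cauchyIntegral_le hA α β)]
    with x hx
  rwa [norm_pow, norm_norm]

lemma integral_sq_norm_cauchyIntegral_le (hA : LipschitzWith L A) (hαβ : α ≤ β) :
    ∫ x in Icc α β, ‖cauchyIntegral A ((Icc α β).indicator (graphDensity A)) x‖ ^ 2 ≤
      (8 + (2 * Real.log (1 + L) ^ 2 + Real.pi ^ 2)) * (β - α) := by
  have hmajorant := (intervalIntegrable_iff_integrableOn_Ioo_of_le hαβ).1
    (intervalIntegrable_two_mul_sqLogEndpoints_rescale_add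
      (2 * Real.log (1 + L) ^ 2 + Real.pi ^ 2) α β)
  have hint := (integrableOn_sq_norm_cauchyIntegral hA hαβ).mono_set Ioo_subset_Icc_self
  rw [← integral_two_mul_sqLogEndpoints_rescale_add, intervalIntegral.integral_of_le hαβ,
    integral_Ioc_eq_integral_Ioo, integral_Icc_eq_integral_Ioo]
  exact setIntegral_mono_on_ae hint hmajorant measurableSet_Ioo
    (ae_sq_norm_cauchyIntegral_le hA α β)

end graphParam

theorem cauchyBTesting_general (L : ℝ≥0) :
    ∃ C : ℝ, ∀ A : ℝ → ℝ, LipschitzWith L A →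
      ∀ α β : ℝ, α ≤ β →
        (∀ x ∈ Ioo α β,
          (∀ ε : ℝ, 0 < ε →
            IntegrableOn
              (fun y => cauchyKernel A x y * (Icc α β).indicator (graphDensity A) y)
              (Ioo (x - ε) (x + ε))ᶜ) ∧
          (DifferentiableAt ℝ A x →
            Tendsto
              (fun ε => truncatedCauchy A ε ((Icc α β).indicator (graphDensity A)) x)
              (𝓝[>] (0 : ℝ))
              (𝓝 (Complex.log
                ((((x - α : ℝ) : ℂ) + Complex.I * ((A x - A α : ℝ) : ℂ)) /
                  (((β - x : ℝ) : ℂ) + Complex.I * ((A β - A x : ℝ) : ℂ))))))) ∧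
        IntegrableOn
          (fun x => ‖cauchyIntegral A ((Icc α β).indicator (graphDensity A)) x‖ ^ 2)
          (Icc α β) ∧
        ∫ x in Icc α β, ‖cauchyIntegral A ((Icc α β).indicator (graphDensity A)) x‖ ^ 2
          ≤ C * (β - α) := by
  refine ⟨8 + (2 * Real.log (1 + L) ^ 2 + Real.pi ^ 2), fun A hA α β hαβ =>
    ⟨fun x hx => ⟨fun ε hε => ?_, fun hd => ?_⟩, integrableOn_sq_norm_cauchyIntegral hA hαβ,
      integral_sq_norm_cauchyIntegral_le hA hαβ⟩⟩
  · have hb : Integrable ((Icc α β).indicator (graphDensity A)) :=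
      (integrableOn_graphDensity hA measure_Icc_lt_top.ne).integrable_indicator measurableSet_Icc
    exact integrableOn_cauchyKernel_mul_compl_Ioo hA.continuous.measurable hb x hε
  · rw [← graphParam_sub, ← graphParam_sub]
    exact tendsto_truncatedCauchy_indicator_graphDensity hA hx hd

/-- **`b`-testing for the Cauchy integral along a Lipschitz graph.** For `A` Lipschitz and
differentiable, `b = 1 + i A'` and `I = [α, β]`: at every `x ∈ (α, β)` the truncated integrals of
`1_I b` converge absolutely, the principal value `C_A(1_I b)(x)` exists and is the stated
principal logarithm, and `∫_α^β |C_A(1_I b)|² ≤ C (β - α)` (with `|C_A(1_I b)|²` integrable),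
where `C` depends only on the Lipschitz constant. -/
theorem cauchyBTesting (L : ℝ≥0) :
    ∃ C : ℝ, ∀ A : ℝ → ℝ, LipschitzWith L A → Differentiable ℝ A →
      ∀ α β : ℝ, α ≤ β →
        (∀ x ∈ Ioo α β,
          (∀ ε : ℝ, 0 < ε →
            IntegrableOn
              (fun y => cauchyKernel A x y * (Icc α β).indicator (graphDensity A) y)
              (Ioo (x - ε) (x + ε))ᶜ) ∧
          Tendsto
            (fun ε => truncatedCauchy A ε ((Icc α β).indicator (graphDensity A)) x)
            (𝓝[>] (0 : ℝ))
            (𝓝 (Complex.log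
              ((((x - α : ℝ) : ℂ) + Complex.I * ((A x - A α : ℝ) : ℂ)) /
                (((β - x : ℝ) : ℂ) + Complex.I * ((A β - A x : ℝ) : ℂ)))))) ∧
        IntegrableOn
          (fun x => ‖cauchyIntegral A ((Icc α β).indicator (graphDensity A)) x‖ ^ 2)
          (Icc α β) ∧
        ∫ x in Icc α β, ‖cauchyIntegral A ((Icc α β).indicator (graphDensity A)) x‖ ^ 2
          ≤ C * (β - α) := by
  obtain ⟨C, hC⟩ := cauchyBTesting_general L
  exact ⟨C, fun A hA hd α β hαβ => (hC A hA α β hαβ).imp_left fun hpv x hx =>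
    (hpv x hx).imp_right fun hlim => hlim (hd x)⟩
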